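/- arXiv:2205.12114 — 2 statements merged into one kernel-verified Lean document; each statement's English description precedes it below -/
import Mathlib

section
/- Every language in the Boolean closure of the languages of one-register NRAs without disequality guards is recognized by a deterministic register set automaton: if B is the smallest class of data-word languages that contains L(A) for every NRA⁼₁ A and is closed under union, intersection, and complement, then every L ∈ B satisfies L = L(D) for some DRsA D. -/
/-- A data word over alphabet `Sigma`, with data domain `𝔻 = ℕ`. -/
abbrev DataWord (Sigma : Type) : Type :=
  List (Sigma × ℕ)
/-- An update instruction of a register automaton: copy the content of register `r`,
store the current input value (`in`), or clear the register (`⊥`). -/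
inductive NRAUpd : Type where
  | reg (r : ℕ)
  | input
  | clear

/-- A transition `(src, letter, gEq, gNeq, upd, tgt)` of a register automaton. -/
structure NRATrans (Sigma : Type) where
  src : ℕ
  letter : Sigma
  gEq : Finset ℕ
  gNeq : Finset ℕ
  upd : ℕ → NRAUpd
  tgt : ℕ

/-- The register assignment obtained after taking transition `t` with current input
data value `d`, starting from the assignment `f`. -/
def NRATrans.apply {Sigma : Type} (t : NRATrans Sigma) (f : ℕ → Option ℕ) (d : ℕ) :
    ℕ → Option ℕ := fun r =>
  match t.upd r with
  | NRAUpd.reg r' => f r'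
  | NRAUpd.input => some d
  | NRAUpd.clear => none

/-- A (nondeterministic) register automaton; states and registers are drawn from `ℕ`. -/
structure NRA (Sigma : Type) where
  Q : Finset ℕ
  R : Finset ℕ
  Δ : Set (NRATrans Sigma)
  I : Finset ℕ
  F : Finset ℕ
  finite_trans : Δ.Finite
  I_sub : I ⊆ Q
  F_sub : F ⊆ Q
  wf : ∀ t ∈ Δ, t.src ∈ Q ∧ t.tgt ∈ Q ∧ t.gEq ⊆ R ∧ t.gNeq ⊆ R ∧
    Disjoint t.gEq t.gNeq ∧ ∀ r ∈ R, ∀ r' : ℕ, t.upd r = NRAUpd.reg r' → r' ∈ R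

/-- One step of an NRA from configuration `c` to configuration `c'`, reading
the letter `x`. -/
def NRA.Step {Sigma : Type} (A : NRA Sigma) (c : ℕ × (ℕ → Option ℕ)) (x : Sigma × ℕ)
    (c' : ℕ × (ℕ → Option ℕ)) : Prop :=
  ∃ t ∈ A.Δ, t.src = c.1 ∧ t.letter = x.1 ∧
    (∀ r ∈ t.gEq, c.2 r = some x.2) ∧ (∀ r ∈ t.gNeq, c.2 r ≠ some x.2) ∧
    c' = (t.tgt, t.apply c.2 x.2)

/-- `A.Run c w c'` holds iff `A` can read the data word `w` going from
configuration `c` to configuration `c'`. -/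
inductive NRA.Run {Sigma : Type} (A : NRA Sigma) :
    (ℕ × (ℕ → Option ℕ)) → DataWord Sigma → (ℕ × (ℕ → Option ℕ)) → Prop where
  | nil (c : ℕ × (ℕ → Option ℕ)) : NRA.Run A c [] c
  | cons {c c' c'' : ℕ × (ℕ → Option ℕ)} {x : Sigma × ℕ} {w : DataWord Sigma} :
      A.Step c x c' → NRA.Run A c' w c'' → NRA.Run A c (x :: w) c''

/-- The language of an NRA: words on which there exists an accepting run
starting from some initial state with all registers empty (`⊥`). -/
def NRA.Lang {Sigma : Type} (A : NRA Sigma) : Set (DataWord Sigma) :=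
  { w | ∃ q₀ ∈ A.I, ∃ c : ℕ × (ℕ → Option ℕ),
      A.Run (q₀, fun _ => none) w c ∧ c.1 ∈ A.F }

/-- The language of a universal register automaton (same syntax as an NRA):
a data word `w` is accepted iff every run of the automaton on `w` is accepting,
where a run that gets stuck before reading all of `w` counts as non-accepting.
Equivalently: every partial run on a proper prefix of `w` can be extended, and
every run reading all of `w` ends in a final state. -/
def NRA.URALang {Sigma : Type} (A : NRA Sigma) : Set (DataWord Sigma) :=
  { w | ∀ q₀ ∈ A.I, ∀ u v : DataWord Sigma, w = u ++ v →
      ∀ c : ℕ × (ℕ → Option ℕ), A.Run (q₀, fun _ => none) u c →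
        (v = [] → c.1 ∈ A.F) ∧
        ∀ x v', v = x :: v' → ∃ c', A.Step c x c' }
/-- A transition `(src, letter, gIn, gNin, upd, tgt)` of a register set automaton.
In the update, `none` stands for the current input value `in`, and `some r`
for register `r`. -/
structure RsATrans (Sigma : Type) where
  src : ℕ
  letter : Sigma
  gIn : Finset ℕ
  gNin : Finset ℕ
  upd : ℕ → Finset (Option ℕ)
  tgt : ℕ

/-- The register assignment obtained after taking transition `t` with current input
data value `d`, starting from the assignment `f`: each register gets the union of
the contents of the registers in its update set, together with `{d}` if the update
set contains `in`. -/
def RsATrans.apply {Sigma : Type} (t : RsATrans Sigma) (f : ℕ → Finset ℕ) (d : ℕ) :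
    ℕ → Finset ℕ := fun r =>
  (t.upd r).biUnion fun o =>
    match o with
    | none => {d}
    | some r' => f r'

/-- A register set automaton (RsA); states and registers are drawn from `ℕ`. -/
structure RsA (Sigma : Type) where
  Q : Finset ℕ
  R : Finset ℕ
  Δ : Set (RsATrans Sigma)
  I : Finset ℕ
  F : Finset ℕ
  finite_trans : Δ.Finite
  I_sub : I ⊆ Q
  F_sub : F ⊆ Q
  wf : ∀ t ∈ Δ, t.src ∈ Q ∧ t.tgt ∈ Q ∧ t.gIn ⊆ R ∧ t.gNin ⊆ R ∧
    Disjoint t.gIn t.gNin ∧ ∀ r ∈ R, ∀ r' : ℕ, some r' ∈ t.upd r → r' ∈ R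

/-- One step of an RsA from configuration `c` to configuration `c'`, reading
the letter `x`. -/
def RsA.Step {Sigma : Type} (A : RsA Sigma) (c : ℕ × (ℕ → Finset ℕ)) (x : Sigma × ℕ)
    (c' : ℕ × (ℕ → Finset ℕ)) : Prop :=
  ∃ t ∈ A.Δ, t.src = c.1 ∧ t.letter = x.1 ∧
    (∀ r ∈ t.gIn, x.2 ∈ c.2 r) ∧ (∀ r ∈ t.gNin, x.2 ∉ c.2 r) ∧
    c' = (t.tgt, t.apply c.2 x.2)

/-- `A.Run c w c'` holds iff `A` can read the data word `w` going from
configuration `c` to configuration `c'`. -/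
inductive RsA.Run {Sigma : Type} (A : RsA Sigma) :
    (ℕ × (ℕ → Finset ℕ)) → DataWord Sigma → (ℕ × (ℕ → Finset ℕ)) → Prop where
  | nil (c : ℕ × (ℕ → Finset ℕ)) : RsA.Run A c [] c
  | cons {c c' c'' : ℕ × (ℕ → Finset ℕ)} {x : Sigma × ℕ} {w : DataWord Sigma} :
      A.Step c x c' → RsA.Run A c' w c'' → RsA.Run A c (x :: w) c''

/-- The language of an RsA: words on which there exists an accepting run
starting from some initial state with all registers empty. -/
def RsA.Lang {Sigma : Type} (A : RsA Sigma) : Set (DataWord Sigma) :=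
  { w | ∃ q₀ ∈ A.I, ∃ c : ℕ × (ℕ → Finset ℕ),
      A.Run (q₀, fun _ => ∅) w c ∧ c.1 ∈ A.F }
/-- An RsA is deterministic (a DRsA) iff any two distinct transitions from the same
state over the same letter have incompatible guards. -/
def RsA.Deterministic {Sigma : Type} (A : RsA Sigma) : Prop :=
  ∀ t₁ ∈ A.Δ, ∀ t₂ ∈ A.Δ, t₁ ≠ t₂ → t₁.src = t₂.src → t₁.letter = t₂.letter →
    (t₁.gIn ∩ t₂.gNin).Nonempty ∨ (t₂.gIn ∩ t₁.gNin).Nonempty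

/-- The Boolean closure of the languages of NRAs with at most one register and no
disequality guards: the smallest class containing those languages and closed under
union, intersection, and complement. -/
inductive BoolClosureNRAeq1 (Sigma : Type) : Set (DataWord Sigma) → Prop where
  | base (A : NRA Sigma) (hreg : A.R.card ≤ 1) (hneq : ∀ t ∈ A.Δ, t.gNeq = ∅) :
      BoolClosureNRAeq1 Sigma (NRA.Lang A)
  | union {L₁ L₂ : Set (DataWord Sigma)} :
      BoolClosureNRAeq1 Sigma L₁ → BoolClosureNRAeq1 Sigma L₂ →
      BoolClosureNRAeq1 Sigma (L₁ ∪ L₂)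
  | inter {L₁ L₂ : Set (DataWord Sigma)} :
      BoolClosureNRAeq1 Sigma L₁ → BoolClosureNRAeq1 Sigma L₂ →
      BoolClosureNRAeq1 Sigma (L₁ ∩ L₂)
  | compl {L : Set (DataWord Sigma)} :
      BoolClosureNRAeq1 Sigma L → BoolClosureNRAeq1 Sigma Lᶜ

/-! ### Functional presentation of complete deterministic register set automata -/

/-- A complete deterministic register set machine over finite types. -/
structure DMach (Sigma : Type) where
  S : Type
  R : Type
  finS : Finite S
  finR : Fintype R
  δ : S → Sigma → Finset R → S
  u : S → Sigma → Finset R → R → Finset (Option R)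
  s0 : S
  acc : Set S

namespace DMach

open Classical

attribute [instance] DMach.finS DMach.finR

variable {Sigma : Type}

/-- Registers containing `d`. -/
noncomputable def pat (M : DMach Sigma) (g : M.R → Finset ℕ) (d : ℕ) : Finset M.R :=
  Finset.univ.filter fun i => d ∈ g i

/-- One step. -/
noncomputable def step (M : DMach Sigma) (c : M.S × (M.R → Finset ℕ)) (x : Sigma × ℕ) :
    M.S × (M.R → Finset ℕ) :=
  (M.δ c.1 x.1 (M.pat c.2 x.2),
    fun i => (M.u c.1 x.1 (M.pat c.2 x.2) i).biUnion fun o => o.elim {x.2} c.2)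

/-- Accepted language. -/
def lang (M : DMach Sigma) : Set (DataWord Sigma) :=
  { w | (w.foldl M.step (M.s0, fun _ => ∅)).1 ∈ M.acc }

theorem mem_pat (M : DMach Sigma) (g : M.R → Finset ℕ) (d : ℕ) (i : M.R) :
    i ∈ M.pat g d ↔ d ∈ g i := by simp [pat]

/-! #### Encoding into `RsA` -/

/-- The encoded transition. -/
noncomputable def encT (M : DMach Sigma) (eS : M.S ↪ ℕ) (eR : M.R ↪ ℕ)
    (p : M.S × Sigma × Finset M.R) : RsATrans Sigma where
  src := eS p.1
  letter := p.2.1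
  gIn := p.2.2.map eR
  gNin := p.2.2ᶜ.map eR
  upd := Function.extend eR (fun i => (M.u p.1 p.2.1 p.2.2 i).image (Option.map eR))
    (fun _ => ∅)
  tgt := eS (M.δ p.1 p.2.1 p.2.2)

/-- The encoded configuration. -/
noncomputable def encC (M : DMach Sigma) (eS : M.S ↪ ℕ) (eR : M.R ↪ ℕ)
    (c : M.S × (M.R → Finset ℕ)) : ℕ × (ℕ → Finset ℕ) :=
  (eS c.1, Function.extend eR c.2 (fun _ => ∅))

theorem encT_apply (M : DMach Sigma) (eS : M.S ↪ ℕ) (eR : M.R ↪ ℕ)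
    (c : M.S × (M.R → Finset ℕ)) (x : Sigma × ℕ) :
    ((M.encT eS eR (c.1, x.1, M.pat c.2 x.2)).tgt,
      (M.encT eS eR (c.1, x.1, M.pat c.2 x.2)).apply (M.encC eS eR c).2 x.2)
      = M.encC eS eR (M.step c x) := by
  refine Prod.ext rfl ?_
  funext n
  by_cases h : ∃ i, eR i = n
  · obtain ⟨i, rfl⟩ := h
    simp only [RsATrans.apply, encT, encC, step, eR.injective.extend_apply]
    ext v
    simp only [Finset.mem_biUnion, Finset.mem_image]
    constructor
    · rintro ⟨o, ⟨o', ho', rfl⟩, hv⟩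
      refine ⟨o', ho', ?_⟩
      cases o' with
      | none => simpa using hv
      | some j => simpa [eR.injective.extend_apply] using hv
    · rintro ⟨o', ho', hv⟩
      refine ⟨_, ⟨o', ho', rfl⟩, ?_⟩
      cases o' with
      | none => simpa using hv
      | some j => simpa [eR.injective.extend_apply] using hv
  · simp [RsATrans.apply, encT, encC, Function.extend_apply' _ _ _ h]

/-- The encoded automaton. -/
noncomputable def toRsA [Finite Sigma] (M : DMach Sigma) (eS : M.S ↪ ℕ) (eR : M.R ↪ ℕ) :
    RsA Sigma where
  Q := (Set.finite_range eS).toFinset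
  R := Finset.univ.map eR
  Δ := Set.range (M.encT eS eR)
  I := {eS M.s0}
  F := (Set.toFinite (eS '' M.acc)).toFinset
  finite_trans := Set.finite_range _
  I_sub := by intro n hn; simp at hn; simp [hn]
  F_sub := by
    intro n hn
    simp at hn
    obtain ⟨s, _, rfl⟩ := hn
    simp
  wf := by
    rintro _ ⟨p, rfl⟩
    refine ⟨by simp [encT], by simp [encT], ?_, ?_, ?_, ?_⟩
    · exact Finset.map_subset_map.2 (Finset.subset_univ _)
    · exact Finset.map_subset_map.2 (Finset.subset_univ _)
    · exact (Finset.disjoint_map eR).2 disjoint_compl_right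
    · intro r hr r' hr'
      simp only [Finset.mem_map, Finset.mem_univ, true_and] at hr ⊢
      obtain ⟨i, rfl⟩ := hr
      simp only [encT, eR.injective.extend_apply, Finset.mem_image, Option.map_eq_some_iff] at hr'
      obtain ⟨_, _, j, _, h⟩ := hr'
      exact ⟨j, h⟩

theorem toRsA_det [Finite Sigma] (M : DMach Sigma) (eS : M.S ↪ ℕ) (eR : M.R ↪ ℕ) :
    (M.toRsA eS eR).Deterministic := by
  rintro _ ⟨⟨s, a, P⟩, rfl⟩ _ ⟨⟨s', a', P'⟩, rfl⟩ hne hs ha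
  have hs' : s = s' := eS.injective hs
  have ha' : a = a' := ha
  subst hs' ha'
  have hP : P ≠ P' := by rintro rfl; exact hne rfl
  have : ∃ i, ¬ (i ∈ P ↔ i ∈ P') := by
    by_contra h
    push Not at h
    exact hP (Finset.ext h)
  obtain ⟨i, hi⟩ := this
  by_cases h : i ∈ P
  · left
    refine ⟨eR i, ?_⟩
    simp only [encT, Finset.mem_inter, Finset.mem_map', Finset.mem_compl]
    tauto
  · right
    refine ⟨eR i, ?_⟩
    simp only [encT, Finset.mem_inter, Finset.mem_map', Finset.mem_compl]
    tauto

theorem toRsA_step [Finite Sigma] (M : DMach Sigma) (eS : M.S ↪ ℕ) (eR : M.R ↪ ℕ)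
    (c : M.S × (M.R → Finset ℕ)) (x : Sigma × ℕ) (c' : ℕ × (ℕ → Finset ℕ)) :
    (M.toRsA eS eR).Step (M.encC eS eR c) x c' ↔ c' = M.encC eS eR (M.step c x) := by
  rw [← encT_apply]
  constructor
  · rintro ⟨_, ⟨⟨s, a, P⟩, rfl⟩, hs, ha, hin, hnin, rfl⟩
    have hs' : s = c.1 := eS.injective hs
    have ha' : a = x.1 := ha
    have hP : P = M.pat c.2 x.2 := by
      ext i
      rw [mem_pat]
      by_cases h : i ∈ P
      · have := hin (eR i) (by simpa [encT] using h)
        simp only [encC, eR.injective.extend_apply] at this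
        simp [h, this]
      · have := hnin (eR i) (by simpa [encT] using h)
        simp only [encC, eR.injective.extend_apply] at this
        simp [h, this]
    subst hs' ha' hP
    rfl
  · rintro rfl
    refine ⟨_, ⟨_, rfl⟩, rfl, rfl, ?_, ?_, rfl⟩
    · intro r hr
      simp only [encT, Finset.mem_map] at hr
      obtain ⟨i, hi, rfl⟩ := hr
      simpa only [encC, eR.injective.extend_apply, mem_pat] using hi
    · intro r hr
      simp only [encT, Finset.mem_map] at hr
      obtain ⟨i, hi, rfl⟩ := hr
      simpa only [encC, eR.injective.extend_apply, mem_pat, Finset.mem_compl] using hi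

theorem toRsA_run [Finite Sigma] (M : DMach Sigma) (eS : M.S ↪ ℕ) (eR : M.R ↪ ℕ)
    (w : DataWord Sigma) (c : M.S × (M.R → Finset ℕ)) (c' : ℕ × (ℕ → Finset ℕ)) :
    (M.toRsA eS eR).Run (M.encC eS eR c) w c' ↔ c' = M.encC eS eR (w.foldl M.step c) := by
  induction w generalizing c with
  | nil =>
    constructor
    · intro h; cases h; rfl
    · rintro rfl; exact RsA.Run.nil _
  | cons x w ih =>
    rw [List.foldl_cons, ← ih]
    constructor
    · intro h
      cases h with
      | cons h1 h2 => rw [toRsA_step] at h1; subst h1; exact h2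
    · intro h
      exact RsA.Run.cons ((M.toRsA_step eS eR _ _ _).2 rfl) h

theorem exists_RsA [Finite Sigma] (M : DMach Sigma) :
    ∃ D : RsA Sigma, D.Deterministic ∧ RsA.Lang D = M.lang := by
  obtain ⟨nS, ⟨e⟩⟩ := Finite.exists_equiv_fin M.S
  obtain ⟨nR, ⟨e'⟩⟩ := Finite.exists_equiv_fin M.R
  let eS : M.S ↪ ℕ := e.toEmbedding.trans Fin.valEmbedding
  let eR : M.R ↪ ℕ := e'.toEmbedding.trans Fin.valEmbedding
  refine ⟨M.toRsA eS eR, M.toRsA_det eS eR, ?_⟩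
  have h0 : ((eS M.s0, fun _ => ∅) : ℕ × (ℕ → Finset ℕ)) = M.encC eS eR (M.s0, fun _ => ∅) := by
    refine Prod.ext rfl ?_
    funext n
    by_cases h : ∃ i, eR i = n
    · obtain ⟨i, rfl⟩ := h
      simp only [encC, eR.injective.extend_apply]
    · simp [encC]
  ext w
  have hI : (M.toRsA eS eR).I = {eS M.s0} := rfl
  have hF : ∀ s, eS s ∈ (M.toRsA eS eR).F ↔ s ∈ M.acc := by
    intro s; simp [toRsA]
  simp only [RsA.Lang, lang, Set.mem_ofPred_eq, hI, Finset.mem_singleton, exists_eq_left, h0,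
    toRsA_run]
  exact hF _

/-! #### Boolean operations -/

/-- Complement. -/
def compl (M : DMach Sigma) : DMach Sigma := { M with acc := M.accᶜ }

theorem lang_compl (M : DMach Sigma) : M.compl.lang = M.langᶜ := rfl

/-- Left part of a set of registers. -/
noncomputable def pl (M N : DMach Sigma) (P : Finset (M.R ⊕ N.R)) : Finset M.R :=
  Finset.univ.filter fun i => Sum.inl i ∈ P

/-- Right part of a set of registers. -/
noncomputable def pr (M N : DMach Sigma) (P : Finset (M.R ⊕ N.R)) : Finset N.R :=
  Finset.univ.filter fun i => Sum.inr i ∈ P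

theorem mem_pl (M N : DMach Sigma) (P : Finset (M.R ⊕ N.R)) (i : M.R) :
    i ∈ pl M N P ↔ Sum.inl i ∈ P := by simp [pl]

theorem mem_pr (M N : DMach Sigma) (P : Finset (M.R ⊕ N.R)) (i : N.R) :
    i ∈ pr M N P ↔ Sum.inr i ∈ P := by simp [pr]

/-- Renaming of registers in an update. -/
noncomputable def ren {X Y : Type} (f : X → Y) (s : Finset (Option X)) : Finset (Option Y) :=
  s.image (Option.map f)

theorem mem_ren {X Y : Type} (f : X → Y) (s : Finset (Option X)) (o : Option Y) :
    o ∈ ren f s ↔ ∃ o' ∈ s, Option.map f o' = o := by simp [ren]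

/-- Product machine with arbitrary acceptance set. -/
noncomputable def prod (M N : DMach Sigma) (acc : Set (M.S × N.S)) : DMach Sigma where
  S := M.S × N.S
  R := M.R ⊕ N.R
  finS := inferInstance
  finR := inferInstance
  δ := fun s a P => (M.δ s.1 a (pl M N P),
    N.δ s.2 a (pr M N P))
  u := fun s a P => Sum.elim
    (fun i => ren Sum.inl (M.u s.1 a (pl M N P) i))
    (fun i => ren Sum.inr (N.u s.2 a (pr M N P) i))
  s0 := (M.s0, N.s0)
  acc := acc

/-- Combined configuration. -/
def comb (M N : DMach Sigma) (acc : Set (M.S × N.S))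
    (c : M.S × (M.R → Finset ℕ)) (d : N.S × (N.R → Finset ℕ)) :
    (M.prod N acc).S × ((M.prod N acc).R → Finset ℕ) :=
  ((c.1, d.1), Sum.elim c.2 d.2)

theorem comb_step (M N : DMach Sigma) (acc : Set (M.S × N.S))
    (c : M.S × (M.R → Finset ℕ)) (d : N.S × (N.R → Finset ℕ)) (x : Sigma × ℕ) :
    (M.prod N acc).step (comb M N acc c d) x = comb M N acc (M.step c x) (N.step d x) := by
  have h1 : pl M N ((M.prod N acc).pat (comb M N acc c d).2 x.2) = M.pat c.2 x.2 := by
    ext i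
    rw [mem_pat]
    exact (mem_pl M N _ i).trans ((M.prod N acc).mem_pat _ _ _)
  have h2 : pr M N ((M.prod N acc).pat (comb M N acc c d).2 x.2) = N.pat d.2 x.2 := by
    ext i
    rw [mem_pat]
    exact (mem_pr M N _ i).trans ((M.prod N acc).mem_pat _ _ _)
  refine Prod.ext ?_ ?_
  · exact congrArg₂ Prod.mk (congrArg (M.δ c.1 x.1) h1) (congrArg (N.δ d.1 x.1) h2)
  · funext i
    rcases i with i | i
    · ext v
      change v ∈ Finset.biUnion _ _ ↔ v ∈ Finset.biUnion _ _
      rw [Finset.mem_biUnion, Finset.mem_biUnion, ← h1]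
      constructor
      · rintro ⟨o, ho, hv⟩
        obtain ⟨o', ho', rfl⟩ := (mem_ren _ _ _).1 ho
        refine ⟨o', ho', ?_⟩
        cases o' <;> exact hv
      · rintro ⟨o', ho', hv⟩
        refine ⟨Option.map Sum.inl o', (mem_ren _ _ _).2 ⟨o', ho', rfl⟩, ?_⟩
        cases o' <;> exact hv
    · ext v
      change v ∈ Finset.biUnion _ _ ↔ v ∈ Finset.biUnion _ _
      rw [Finset.mem_biUnion, Finset.mem_biUnion, ← h2]
      constructor
      · rintro ⟨o, ho, hv⟩
        obtain ⟨o', ho', rfl⟩ := (mem_ren _ _ _).1 ho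
        refine ⟨o', ho', ?_⟩
        cases o' <;> exact hv
      · rintro ⟨o', ho', hv⟩
        refine ⟨Option.map Sum.inr o', (mem_ren _ _ _).2 ⟨o', ho', rfl⟩, ?_⟩
        cases o' <;> exact hv

theorem comb_foldl (M N : DMach Sigma) (acc : Set (M.S × N.S)) (w : DataWord Sigma)
    (c : M.S × (M.R → Finset ℕ)) (d : N.S × (N.R → Finset ℕ)) :
    w.foldl (M.prod N acc).step (comb M N acc c d) =
      comb M N acc (w.foldl M.step c) (w.foldl N.step d) := by
  induction w generalizing c d with
  | nil => rfl
  | cons x w ih => rw [List.foldl_cons, comb_step, ih]; rfl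

theorem mem_lang_prod (M N : DMach Sigma) (acc : Set (M.S × N.S)) (w : DataWord Sigma) :
    w ∈ (M.prod N acc).lang ↔
      ((w.foldl M.step (M.s0, fun _ => ∅)).1, (w.foldl N.step (N.s0, fun _ => ∅)).1) ∈ acc := by
  have h0 : (((M.prod N acc).s0, fun _ => ∅) :
      (M.prod N acc).S × ((M.prod N acc).R → Finset ℕ)) =
      comb M N acc (M.s0, fun _ => ∅) (N.s0, fun _ => ∅) := by
    refine Prod.ext rfl ?_
    funext i
    rcases i with i | i <;> rfl
  change (w.foldl (M.prod N acc).step ((M.prod N acc).s0, fun _ => ∅)).1 ∈ acc ↔ _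
  rw [h0, comb_foldl]
  rfl

end DMach

/-! ### One-register automata -/

namespace NRA

open Classical

variable {Sigma : Type} (A : NRA Sigma) (r0 : ℕ)

/-- Effective update of the single register. -/
noncomputable def up (t : NRATrans Sigma) : NRAUpd := if r0 ∈ A.R then t.upd r0 else NRAUpd.clear

/-- Content of the single register. -/
noncomputable def val (f : ℕ → Option ℕ) : Option ℕ := if r0 ∈ A.R then f r0 else none

/-- Effect on the single register. -/
noncomputable def eff (t : NRATrans Sigma) (v : Option ℕ) (d : ℕ) : Option ℕ :=
  match A.up r0 t with
  | NRAUpd.reg _ => v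
  | NRAUpd.input => some d
  | NRAUpd.clear => none

/-- Successors of a set of abstract configurations. -/
def post (Y : Set (ℕ × Option ℕ)) (x : Sigma × ℕ) : Set (ℕ × Option ℕ) :=
  { c' | ∃ t ∈ A.Δ, ∃ v, (t.src, v) ∈ Y ∧ t.letter = x.1 ∧
    (t.gEq.Nonempty → v = some x.2) ∧ c' = (t.tgt, A.eff r0 t v x.2) }

/-- Abstraction of configurations. -/
noncomputable def abs (c : ℕ × (ℕ → Option ℕ)) : ℕ × Option ℕ := (c.1, A.val r0 c.2)

variable {A r0}

theorem val_apply (hr : ∀ r ∈ A.R, r = r0) {t : NRATrans Sigma} (ht : t ∈ A.Δ)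
    (f : ℕ → Option ℕ) (d : ℕ) :
    A.val r0 (t.apply f d) = A.eff r0 t (A.val r0 f) d := by
  obtain ⟨_, _, _, _, _, h⟩ := A.wf t ht
  by_cases h0 : r0 ∈ A.R
  · simp only [val, eff, up, if_pos h0, NRATrans.apply]
    cases hu : t.upd r0 with
    | reg r' =>
      have := hr _ (h r0 h0 r' hu)
      subst this; rfl
    | input => rfl
    | clear => rfl
  · simp only [val, eff, up, if_neg h0]

theorem guard_iff (hr : ∀ r ∈ A.R, r = r0) {t : NRATrans Sigma} (ht : t ∈ A.Δ)
    (f : ℕ → Option ℕ) (d : ℕ) :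
    (∀ r ∈ t.gEq, f r = some d) ↔ (t.gEq.Nonempty → A.val r0 f = some d) := by
  obtain ⟨_, _, hg, _⟩ := A.wf t ht
  constructor
  · rintro h ⟨r, hrg⟩
    have h1 := hr r (hg hrg)
    subst h1
    rw [val, if_pos (hg hrg)]
    exact h r hrg
  · intro h r hrg
    have h2 := h ⟨r, hrg⟩
    have h1 := hr r (hg hrg)
    subst h1
    rwa [val, if_pos (hg hrg)] at h2

theorem post_abs (hr : ∀ r ∈ A.R, r = r0) (hneq : ∀ t ∈ A.Δ, t.gNeq = ∅)
    (Y : Set (ℕ × (ℕ → Option ℕ))) (x : Sigma × ℕ) :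
    A.abs r0 '' { c' | ∃ c ∈ Y, A.Step c x c' } = A.post r0 (A.abs r0 '' Y) x := by
  ext c'
  constructor
  · rintro ⟨_, ⟨c, hc, t, ht, hs, ha, hg, _, rfl⟩, rfl⟩
    refine ⟨t, ht, A.val r0 c.2, ⟨c, hc, by rw [hs]; rfl⟩, ha, (guard_iff hr ht _ _).1 hg, ?_⟩
    simp only [abs, val_apply hr ht]
  · rintro ⟨t, ht, v, ⟨c, hc, hcv⟩, ha, hg, rfl⟩
    simp only [abs, Prod.mk.injEq] at hcv
    obtain ⟨h1, rfl⟩ := hcv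
    refine ⟨_, ⟨c, hc, t, ht, h1.symm, ha, (guard_iff hr ht _ _).2 hg, ?_, rfl⟩, ?_⟩
    · simp [hneq t ht]
    · simp only [abs, val_apply hr ht]

theorem run_abs (hr : ∀ r ∈ A.R, r = r0) (hneq : ∀ t ∈ A.Δ, t.gNeq = ∅)
    (w : DataWord Sigma) (Y : Set (ℕ × (ℕ → Option ℕ))) :
    (∃ c ∈ Y, ∃ c', A.Run c w c' ∧ c'.1 ∈ A.F) ↔
      ∃ c ∈ w.foldl (A.post r0) (A.abs r0 '' Y), c.1 ∈ A.F := by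
  induction w generalizing Y with
  | nil =>
    constructor
    · rintro ⟨c, hc, c', h, hF⟩
      cases h
      exact ⟨_, ⟨c, hc, rfl⟩, hF⟩
    · rintro ⟨_, ⟨c, hc, rfl⟩, hF⟩
      exact ⟨c, hc, c, NRA.Run.nil _, hF⟩
  | cons x w ih =>
    rw [List.foldl_cons, ← post_abs hr hneq, ← ih]
    constructor
    · rintro ⟨c, hc, c', h, hF⟩
      cases h with
      | cons h1 h2 => exact ⟨_, ⟨c, hc, h1⟩, c', h2, hF⟩
    · rintro ⟨c1, ⟨c, hc, h1⟩, c', h2, hF⟩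
      exact ⟨c, hc, c', NRA.Run.cons h1 h2, hF⟩

variable (A r0)

/-- The transition `t` is enabled, given states with empty register `N`, states with some
stored value `E`, and states `P` storing the current value. -/
def Fires (N E : Set ℕ) (P : Set ℕ) (t : NRATrans Sigma) : Prop :=
  (t.gEq.Nonempty ∧ t.src ∈ P) ∨ (¬ t.gEq.Nonempty ∧ (t.src ∈ N ∨ t.src ∈ E))

/-- The transition `t` keeps the register. -/
def Keep (t : NRATrans Sigma) : Prop := ∃ r, A.up r0 t = NRAUpd.reg r

/-- Next states with empty register. -/
def nextN (N E P : Set ℕ) (a : Sigma) : Set ℕ :=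
  { s | ∃ t ∈ A.Δ, t.letter = a ∧ t.tgt = s ∧
    ((A.up r0 t = NRAUpd.clear ∧ Fires N E P t) ∨
      (A.Keep r0 t ∧ ¬ t.gEq.Nonempty ∧ t.src ∈ N)) }

/-- Next states that store the current value because of a store or an equality test. -/
def nextIn (N E P : Set ℕ) (a : Sigma) : Set ℕ :=
  { s | ∃ t ∈ A.Δ, t.letter = a ∧ t.tgt = s ∧
    ((A.up r0 t = NRAUpd.input ∧ Fires N E P t) ∨
      (A.Keep r0 t ∧ t.gEq.Nonempty ∧ t.src ∈ P)) }

/-- State `s` inherits the values of state `q`. -/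
def Inh (a : Sigma) (q s : ℕ) : Prop :=
  ∃ t ∈ A.Δ, t.letter = a ∧ t.tgt = s ∧ A.Keep r0 t ∧ ¬ t.gEq.Nonempty ∧ t.src = q

/-- Abstract states with empty register. -/
def setN (Y : Set (ℕ × Option ℕ)) : Set ℕ := { q | (q, none) ∈ Y }

/-- Abstract states with some stored value. -/
def setE (Y : Set (ℕ × Option ℕ)) : Set ℕ := { q | ∃ v, (q, some v) ∈ Y }

theorem mem_post_none (Y : Set (ℕ × Option ℕ)) (a : Sigma) (d : ℕ) (s : ℕ) :
    (s, none) ∈ A.post r0 Y (a, d) ↔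
      s ∈ A.nextN r0 (setN Y) (setE Y) { q | (q, some d) ∈ Y } a := by
  constructor
  · rintro ⟨t, ht, v, hv, ha, hg, h⟩
    simp only [Prod.mk.injEq] at h
    obtain ⟨rfl, h⟩ := h
    refine ⟨t, ht, ha, rfl, ?_⟩
    unfold eff at h
    cases hu : A.up r0 t with
    | reg r' =>
      rw [hu] at h
      subst h
      exact Or.inr ⟨⟨r', hu⟩, fun hh => by simpa using hg hh, hv⟩
    | input => rw [hu] at h; simp at h
    | clear =>
      refine Or.inl ⟨rfl, ?_⟩
      by_cases hh : t.gEq.Nonempty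
      · have := hg hh
        subst this
        exact Or.inl ⟨hh, hv⟩
      · refine Or.inr ⟨hh, ?_⟩
        cases v with
        | none => exact Or.inl hv
        | some v => exact Or.inr ⟨v, hv⟩
  · rintro ⟨t, ht, ha, rfl, (⟨hu, hF⟩ | ⟨⟨r, hu⟩, hg, hN⟩)⟩
    · rcases hF with ⟨hh, hP⟩ | ⟨hh, hN | ⟨v, hv⟩⟩
      · exact ⟨t, ht, some d, hP, ha, fun _ => rfl, by simp [eff, hu]⟩
      · exact ⟨t, ht, none, hN, ha, fun h => absurd h hh, by simp [eff, hu]⟩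
      · exact ⟨t, ht, some v, hv, ha, fun h => absurd h hh, by simp [eff, hu]⟩
    · exact ⟨t, ht, none, hN, ha, fun h => absurd h hg, by simp [eff, hu]⟩

theorem mem_post_some (Y : Set (ℕ × Option ℕ)) (a : Sigma) (d : ℕ) (s e : ℕ) :
    (s, some e) ∈ A.post r0 Y (a, d) ↔
      (e = d ∧ s ∈ A.nextIn r0 (setN Y) (setE Y) { q | (q, some d) ∈ Y } a) ∨
      ∃ q, A.Inh r0 a q s ∧ (q, some e) ∈ Y := by
  constructor
  · rintro ⟨t, ht, v, hv, ha, hg, h⟩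
    simp only [Prod.mk.injEq] at h
    obtain ⟨rfl, h⟩ := h
    unfold eff at h
    cases hu : A.up r0 t with
    | reg r' =>
      rw [hu] at h
      subst h
      by_cases hh : t.gEq.Nonempty
      · have h3 : e = d := by simpa using hg hh
        subst h3
        exact Or.inl ⟨rfl, t, ht, ha, rfl, Or.inr ⟨⟨r', hu⟩, hh, hv⟩⟩
      · exact Or.inr ⟨t.src, ⟨t, ht, ha, rfl, ⟨r', hu⟩, hh, rfl⟩, hv⟩
    | input =>
      rw [hu] at h
      simp only [Option.some.injEq] at h
      refine Or.inl ⟨h, t, ht, ha, rfl, Or.inl ⟨hu, ?_⟩⟩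
      by_cases hh : t.gEq.Nonempty
      · have := hg hh
        subst this
        exact Or.inl ⟨hh, hv⟩
      · refine Or.inr ⟨hh, ?_⟩
        cases v with
        | none => exact Or.inl hv
        | some v => exact Or.inr ⟨v, hv⟩
    | clear => rw [hu] at h; simp at h
  · rintro (⟨rfl, t, ht, ha, rfl, (⟨hu, hF⟩ | ⟨⟨r, hu⟩, hg, hN⟩)⟩ |
      ⟨q, ⟨t, ht, ha, rfl, ⟨r, hu⟩, hh, rfl⟩, hq⟩)
    · rcases hF with ⟨hh, hP⟩ | ⟨hh, hN | ⟨v, hv⟩⟩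
      · exact ⟨t, ht, some e, hP, ha, fun _ => rfl, by simp [eff, hu]⟩
      · exact ⟨t, ht, none, hN, ha, fun h => absurd h hh, by simp [eff, hu]⟩
      · exact ⟨t, ht, some v, hv, ha, fun h => absurd h hh, by simp [eff, hu]⟩
    · exact ⟨t, ht, some e, hN, ha, fun h => rfl, by simp [eff, hu]⟩
    · exact ⟨t, ht, some e, hq, ha, fun h => absurd h hh, by simp [eff, hu]⟩

/-- The deterministic machine simulating a one-register automaton. -/
noncomputable def mach : DMach Sigma where
  S := Set A.Q × Set A.Q
  R := A.Q
  finS := inferInstance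
  finR := inferInstance
  δ := fun s a P =>
    ({ q | q.1 ∈ A.nextN r0 (Subtype.val '' s.1) (Subtype.val '' s.2)
        (Subtype.val '' (P : Set A.Q)) a },
     { q | q.1 ∈ A.nextIn r0 (Subtype.val '' s.1) (Subtype.val '' s.2)
        (Subtype.val '' (P : Set A.Q)) a ∨ ∃ p ∈ s.2, A.Inh r0 a p.1 q.1 })
  u := fun s a P q => Finset.univ.filter fun o => match o with
    | none => q.1 ∈ A.nextIn r0 (Subtype.val '' s.1) (Subtype.val '' s.2)
        (Subtype.val '' (P : Set A.Q)) a
    | some p => A.Inh r0 a p.1 q.1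
  s0 := ({ q | q.1 ∈ A.I }, ∅)
  acc := { s | ∃ q : A.Q, q.1 ∈ A.F ∧ (q ∈ s.1 ∨ q ∈ s.2) }

/-- The simulation invariant. -/
structure Inv (c : (Set A.Q × Set A.Q) × (A.Q → Finset ℕ)) (Y : Set (ℕ × Option ℕ)) : Prop where
  dom : ∀ p ∈ Y, p.1 ∈ A.Q
  n : ∀ q : A.Q, q ∈ c.1.1 ↔ (q.1, none) ∈ Y
  e : ∀ q : A.Q, q ∈ c.1.2 ↔ ∃ v, (q.1, some v) ∈ Y
  g : ∀ (q : A.Q) (v : ℕ), v ∈ c.2 q ↔ (q.1, some v) ∈ Y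

theorem inv_step (c : (Set A.Q × Set A.Q) × (A.Q → Finset ℕ)) (Y : Set (ℕ × Option ℕ))
    (h : A.Inv c Y) (x : Sigma × ℕ) : A.Inv ((A.mach r0).step c x) (A.post r0 Y x) := by
  obtain ⟨a, d⟩ := x
  have hN : (Subtype.val '' c.1.1 : Set ℕ) = setN Y := by
    ext q
    constructor
    · rintro ⟨q, hq, rfl⟩; exact (h.n q).1 hq
    · intro hq; exact ⟨⟨q, h.dom _ hq⟩, (h.n _).2 hq, rfl⟩
  have hE : (Subtype.val '' c.1.2 : Set ℕ) = setE Y := by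
    ext q
    constructor
    · rintro ⟨q, hq, rfl⟩; exact (h.e q).1 hq
    · rintro ⟨v, hq⟩; exact ⟨⟨q, h.dom _ hq⟩, (h.e _).2 ⟨v, hq⟩, rfl⟩
  let P : Finset A.Q := (A.mach r0).pat c.2 d
  have hP : (Subtype.val '' (P : Set A.Q) : Set ℕ) =
      { q | (q, some d) ∈ Y } := by
    ext q
    constructor
    · rintro ⟨q, hq, rfl⟩; exact (h.g q d).1 (((A.mach r0).mem_pat _ _ _).1 hq)
    · intro hq
      exact ⟨⟨q, h.dom _ hq⟩, ((A.mach r0).mem_pat _ _ _).2 ((h.g _ _).2 hq), rfl⟩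
  refine ⟨?_, ?_, ?_, ?_⟩
  · rintro _ ⟨t, ht, v, _, _, _, rfl⟩
    exact (A.wf t ht).2.1
  · intro q
    rw [mem_post_none, ← hN, ← hE, ← hP]
    rfl
  · intro q
    simp only [mem_post_some]
    rw [← hN, ← hE, ← hP]
    change (_ ∨ _) ↔ _
    constructor
    · rintro (h1 | ⟨p, hp, hi⟩)
      · exact ⟨d, Or.inl ⟨rfl, h1⟩⟩
      · obtain ⟨v, hv⟩ := (h.e p).1 hp
        exact ⟨v, Or.inr ⟨p.1, hi, hv⟩⟩
    · rintro ⟨v, ⟨rfl, h1⟩ | ⟨p, hi, hp⟩⟩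
      · exact Or.inl h1
      · exact Or.inr ⟨⟨p, h.dom _ hp⟩, (h.e _).2 ⟨v, hp⟩, hi⟩
  · intro q v
    rw [mem_post_some, ← hN, ← hE, ← hP]
    change v ∈ Finset.biUnion _ _ ↔ _
    rw [Finset.mem_biUnion]
    constructor
    · rintro ⟨o, ho, hv⟩
      have ho' := (Finset.mem_filter.1 ho).2
      cases o with
      | none => exact Or.inl ⟨Finset.mem_singleton.1 hv, ho'⟩
      | some p => exact Or.inr ⟨p.1, ho', (h.g p v).1 hv⟩
    · rintro (⟨rfl, h1⟩ | ⟨p, hi, hp⟩)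
      · exact ⟨none, Finset.mem_filter.2 ⟨Finset.mem_univ _, h1⟩, Finset.mem_singleton.2 rfl⟩
      · exact ⟨some ⟨p, h.dom _ hp⟩, Finset.mem_filter.2 ⟨Finset.mem_univ _, hi⟩,
          (h.g ⟨p, h.dom _ hp⟩ v).2 hp⟩

theorem inv_foldl (w : DataWord Sigma) (c : (Set A.Q × Set A.Q) × (A.Q → Finset ℕ))
    (Y : Set (ℕ × Option ℕ)) (h : A.Inv c Y) :
    A.Inv (w.foldl (A.mach r0).step c) (w.foldl (A.post r0) Y) := by
  induction w generalizing c Y with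
  | nil => exact h
  | cons x w ih => exact ih _ _ (A.inv_step r0 c Y h x)

variable {A r0}

theorem mach_lang (hr : ∀ r ∈ A.R, r = r0) (hneq : ∀ t ∈ A.Δ, t.gNeq = ∅) :
    (A.mach r0).lang = A.Lang := by
  ext w
  have h0 : A.Inv ((A.mach r0).s0, fun _ => ∅)
      (A.abs r0 '' { c | ∃ q ∈ A.I, c = (q, fun _ => none) }) := by
    have hv : A.val r0 (fun _ => none) = none := by simp [val]
    refine ⟨?_, ?_, ?_, ?_⟩
    · rintro _ ⟨_, ⟨q, hq, rfl⟩, rfl⟩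
      exact A.I_sub hq
    · intro q
      change q.1 ∈ A.I ↔ _
      constructor
      · intro hq
        exact ⟨_, ⟨q.1, hq, rfl⟩, by simp [abs, hv]⟩
      · rintro ⟨_, ⟨q', hq, rfl⟩, hh⟩
        simp only [abs, Prod.mk.injEq] at hh
        rw [← hh.1]; exact hq
    · intro q
      change False ↔ _
      constructor
      · exact False.elim
      · rintro ⟨v, _, ⟨q', hq, rfl⟩, hh⟩
        simp [abs, hv] at hh
    · intro q v
      simp only [Finset.notMem_empty, false_iff]
      rintro ⟨_, ⟨q', hq, rfl⟩, hh⟩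
      simp [abs, hv] at hh
  have h1 := A.inv_foldl r0 w _ _ h0
  have h2 := run_abs hr hneq w { c | ∃ q ∈ A.I, c = (q, fun _ => none) }
  have h3 : w ∈ A.Lang ↔ ∃ c ∈ ({ c | ∃ q ∈ A.I, c = (q, fun _ => none) } :
      Set (ℕ × (ℕ → Option ℕ))), ∃ c', A.Run c w c' ∧ c'.1 ∈ A.F := by
    constructor
    · rintro ⟨q, hq, c, hc⟩
      exact ⟨_, ⟨q, hq, rfl⟩, c, hc⟩
    · rintro ⟨_, ⟨q, hq, rfl⟩, c, hc⟩
      exact ⟨q, hq, c, hc⟩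
  rw [h3, h2]
  constructor
  · rintro ⟨q, hF, hq | hq⟩
    · exact ⟨_, (h1.n q).1 hq, hF⟩
    · obtain ⟨v, hv⟩ := (h1.e q).1 hq
      exact ⟨_, hv, hF⟩
  · rintro ⟨⟨q, v⟩, hc, hF⟩
    refine ⟨⟨q, h1.dom _ hc⟩, hF, ?_⟩
    cases v with
    | none => exact Or.inl ((h1.n _).2 hc)
    | some v => exact Or.inr ((h1.e _).2 ⟨v, hc⟩)

end NRA

theorem BoolClosureNRAeq1.exists_mach {Sigma : Type} {L : Set (DataWord Sigma)}
    (hL : BoolClosureNRAeq1 Sigma L) : ∃ M : DMach Sigma, M.lang = L := by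
  induction hL with
  | base A hreg hneq =>
    obtain ⟨r0, hr⟩ : ∃ r0, ∀ r ∈ A.R, r = r0 := by
      rcases A.R.eq_empty_or_nonempty with h | ⟨r0, h⟩
      · exact ⟨0, by simp [h]⟩
      · exact ⟨r0, fun r hr => Finset.card_le_one.1 hreg r hr r0 h⟩
    exact ⟨A.mach r0, NRA.mach_lang hr hneq⟩
  | union _ _ ih₁ ih₂ =>
    obtain ⟨M, rfl⟩ := ih₁
    obtain ⟨N, rfl⟩ := ih₂
    refine ⟨M.prod N { p | p.1 ∈ M.acc ∨ p.2 ∈ N.acc }, ?_⟩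
    ext w
    rw [DMach.mem_lang_prod]
    rfl
  | inter _ _ ih₁ ih₂ =>
    obtain ⟨M, rfl⟩ := ih₁
    obtain ⟨N, rfl⟩ := ih₂
    refine ⟨M.prod N { p | p.1 ∈ M.acc ∧ p.2 ∈ N.acc }, ?_⟩
    ext w
    rw [DMach.mem_lang_prod]
    rfl
  | compl _ ih =>
    obtain ⟨M, rfl⟩ := ih
    exact ⟨M.compl, M.lang_compl⟩

/-- Every language in the Boolean closure of the languages of
one-register NRAs without disequality guards is recognized by a deterministic RsA. -/
theorem boolean_closure_nra_eq_one_to_drsa (Sigma : Type) [Fintype Sigma]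
    [Nonempty Sigma] (L : Set (DataWord Sigma)) (hL : BoolClosureNRAeq1 Sigma L) :
    ∃ D : RsA Sigma, D.Deterministic ∧ RsA.Lang D = L := by
  obtain ⟨M, rfl⟩ := hL.exists_mach
  exact M.exists_RsA
end

section
/- For every register set automaton with register emptiness test A, there exists an ordinary register set automaton A' (with the same set of registers) such that L(A') = L(A). -/
/-- A transition of an RsA with register emptiness test: additionally carries the
set `gEmp` of registers that must be empty for the transition to fire. -/
structure RsAETrans (Sigma : Type) where
  src : ℕ
  letter : Sigma
  gIn : Finset ℕ
  gNin : Finset ℕ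
  gEmp : Finset ℕ
  upd : ℕ → Finset (Option ℕ)
  tgt : ℕ

/-- The register assignment obtained after taking transition `t` with current input
data value `d`, starting from the assignment `f`. -/
def RsAETrans.apply {Sigma : Type} (t : RsAETrans Sigma) (f : ℕ → Finset ℕ) (d : ℕ) :
    ℕ → Finset ℕ := fun r =>
  (t.upd r).biUnion fun o =>
    match o with
    | none => {d}
    | some r' => f r'

/-- An RsA with register emptiness test. -/
structure RsAE (Sigma : Type) where
  Q : Finset ℕ
  R : Finset ℕ
  Δ : Set (RsAETrans Sigma)
  I : Finset ℕ
  F : Finset ℕ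
  finite_trans : Δ.Finite
  I_sub : I ⊆ Q
  F_sub : F ⊆ Q
  wf : ∀ t ∈ Δ, t.src ∈ Q ∧ t.tgt ∈ Q ∧ t.gIn ⊆ R ∧ t.gNin ⊆ R ∧ t.gEmp ⊆ R ∧
    Disjoint t.gIn t.gNin ∧ ∀ r ∈ R, ∀ r' : ℕ, some r' ∈ t.upd r → r' ∈ R

/-- One step of an RsA with register emptiness test. -/
def RsAE.Step {Sigma : Type} (A : RsAE Sigma) (c : ℕ × (ℕ → Finset ℕ)) (x : Sigma × ℕ)
    (c' : ℕ × (ℕ → Finset ℕ)) : Prop :=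
  ∃ t ∈ A.Δ, t.src = c.1 ∧ t.letter = x.1 ∧
    (∀ r ∈ t.gIn, x.2 ∈ c.2 r) ∧ (∀ r ∈ t.gNin, x.2 ∉ c.2 r) ∧
    (∀ r ∈ t.gEmp, c.2 r = ∅) ∧
    c' = (t.tgt, t.apply c.2 x.2)

/-- Runs of an RsA with register emptiness test. -/
inductive RsAE.Run {Sigma : Type} (A : RsAE Sigma) :
    (ℕ × (ℕ → Finset ℕ)) → DataWord Sigma → (ℕ × (ℕ → Finset ℕ)) → Prop where
  | nil (c : ℕ × (ℕ → Finset ℕ)) : RsAE.Run A c [] c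
  | cons {c c' c'' : ℕ × (ℕ → Finset ℕ)} {x : Sigma × ℕ} {w : DataWord Sigma} :
      A.Step c x c' → RsAE.Run A c' w c'' → RsAE.Run A c (x :: w) c''

/-- The language of an RsA with register emptiness test. -/
def RsAE.Lang {Sigma : Type} (A : RsAE Sigma) : Set (DataWord Sigma) :=
  { w | ∃ q₀ ∈ A.I, ∃ c : ℕ × (ℕ → Finset ℕ),
      A.Run (q₀, fun _ => ∅) w c ∧ c.1 ∈ A.F }

/-- Encoding of a state together with a set of nonempty registers. -/
def rsaeEnc (p : ℕ × Finset ℕ) : ℕ := Encodable.encode p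

theorem rsaeEnc_inj {p p' : ℕ × Finset ℕ} (h : rsaeEnc p = rsaeEnc p') : p = p' :=
  Encodable.encode_injective h

/-- The registers of `R` that are nonempty in `f`. -/
def rsaeNe (R : Finset ℕ) (f : ℕ → Finset ℕ) : Finset ℕ := R.filter fun r => f r ≠ ∅

open Classical in
/-- The symbolic update of the set of nonempty registers. -/
noncomputable def rsaeNext {Sigma : Type} (R : Finset ℕ) (t : RsAETrans Sigma) (S : Finset ℕ) :
    Finset ℕ :=
  R.filter fun r => none ∈ t.upd r ∨ ∃ r' ∈ S, some r' ∈ t.upd r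

/-- The transition of the simulating automaton. -/
noncomputable def rsaeTr {Sigma : Type} (R : Finset ℕ) (p : RsAETrans Sigma × Finset ℕ) :
    RsATrans Sigma where
  src := rsaeEnc (p.1.src, p.2)
  letter := p.1.letter
  gIn := p.1.gIn
  gNin := p.1.gNin
  upd := p.1.upd
  tgt := rsaeEnc (p.1.tgt, rsaeNext R p.1 p.2)

/-- The simulating automaton. -/
noncomputable def rsaeSim {Sigma : Type} (A : RsAE Sigma) : RsA Sigma where
  Q := (A.Q ×ˢ A.R.powerset).image rsaeEnc
  R := A.R
  Δ := rsaeTr A.R '' {p | p ∈ A.Δ ×ˢ (A.R.powerset : Set (Finset ℕ)) ∧ Disjoint p.1.gEmp p.2}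
  I := (A.I ×ˢ {∅}).image rsaeEnc
  F := (A.F ×ˢ A.R.powerset).image rsaeEnc
  finite_trans := by
    apply Set.Finite.image
    exact (A.finite_trans.prod (Finset.finite_toSet _)).subset fun p hp => hp.1
  I_sub := by
    apply Finset.image_subset_image
    apply Finset.product_subset_product A.I_sub
    simp
  F_sub := by
    apply Finset.image_subset_image
    exact Finset.product_subset_product A.F_sub (Finset.Subset.refl _)
  wf := by
    rintro _ ⟨⟨t, S⟩, ⟨⟨ht, hS⟩, -⟩, rfl⟩
    obtain ⟨h1, h2, h3, h4, -, h6, h7⟩ := A.wf t ht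
    refine ⟨Finset.mem_image_of_mem _ (Finset.mem_product.2 ⟨h1, hS⟩),
      Finset.mem_image_of_mem _ (Finset.mem_product.2 ⟨h2, ?_⟩), h3, h4, h6, h7⟩
    exact Finset.mem_powerset.2 (Finset.filter_subset _ _)

theorem mem_rsaeNe (R : Finset ℕ) (f : ℕ → Finset ℕ) (r : ℕ) :
    r ∈ rsaeNe R f ↔ r ∈ R ∧ (f r).Nonempty := by
  simp [rsaeNe, Finset.nonempty_iff_ne_empty]

theorem mem_rsaeNext {Sigma : Type} (R : Finset ℕ) (t : RsAETrans Sigma) (S : Finset ℕ) (r : ℕ) :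
    r ∈ rsaeNext R t S ↔ r ∈ R ∧ (none ∈ t.upd r ∨ ∃ r' ∈ S, some r' ∈ t.upd r) := by
  unfold rsaeNext
  exact Finset.mem_filter

theorem rsaeNext_eq {Sigma : Type} (A : RsAE Sigma) (t : RsAETrans Sigma) (ht : t ∈ A.Δ)
    (f : ℕ → Finset ℕ) (d : ℕ) :
    rsaeNext A.R t (rsaeNe A.R f) = rsaeNe A.R (t.apply f d) := by
  have h7 := (A.wf t ht).2.2.2.2.2.2
  ext r
  rw [mem_rsaeNext, mem_rsaeNe]
  simp only [mem_rsaeNe, RsAETrans.apply, Finset.biUnion_nonempty]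
  refine and_congr_right fun hr => ⟨?_, ?_⟩
  · rintro (h | ⟨r', h, h'⟩)
    · exact ⟨none, h, by simp⟩
    · exact ⟨some r', h', h.2⟩
  · rintro ⟨(_ | r'), h, h'⟩
    · exact Or.inl h
    · exact Or.inr ⟨r', ⟨h7 r hr r' h, h'⟩, h⟩

/-- The lifted configuration. -/
def rsaeLift (R : Finset ℕ) (c : ℕ × (ℕ → Finset ℕ)) : ℕ × (ℕ → Finset ℕ) :=
  (rsaeEnc (c.1, rsaeNe R c.2), c.2)

theorem rsae_disj {Sigma : Type} (A : RsAE Sigma) (t : RsAETrans Sigma) (ht : t ∈ A.Δ)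
    (f : ℕ → Finset ℕ) : Disjoint t.gEmp (rsaeNe A.R f) ↔ ∀ r ∈ t.gEmp, f r = ∅ := by
  have h5 := (A.wf t ht).2.2.2.2.1
  rw [Finset.disjoint_left]
  refine forall₂_congr fun r hr => ?_
  simp [rsaeNe, h5 hr]

theorem rsae_step {Sigma : Type} (A : RsAE Sigma) (c c' : ℕ × (ℕ → Finset ℕ)) (x : Sigma × ℕ) :
    (rsaeSim A).Step (rsaeLift A.R c) x c' ↔ ∃ c1, A.Step c x c1 ∧ c' = rsaeLift A.R c1 := by
  constructor
  · rintro ⟨_, ⟨⟨t, S⟩, ⟨⟨ht, hS⟩, hd⟩, rfl⟩, h1, h2, h3, h4, rfl⟩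
    have h := rsaeEnc_inj h1
    obtain ⟨hq, hSe⟩ := Prod.mk.inj h
    dsimp only at hq hSe hd ht
    subst hSe
    refine ⟨_, ⟨t, ht, hq, h2, h3, h4, (rsae_disj A t ht _).1 hd, rfl⟩, ?_⟩
    have := rsaeNext_eq A t ht c.2 x.2
    exact Prod.ext (congrArg (fun S => rsaeEnc (t.tgt, S)) this) rfl
  · rintro ⟨_, ⟨t, ht, h1, h2, h3, h4, h5, rfl⟩, rfl⟩
    refine ⟨_, ⟨(t, rsaeNe A.R c.2), ⟨⟨ht, ?_⟩, (rsae_disj A t ht _).2 h5⟩, rfl⟩,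
      ?_, h2, h3, h4, ?_⟩
    · exact Finset.mem_coe.2 (Finset.mem_powerset.2 (Finset.filter_subset _ _))
    · simp [rsaeTr, rsaeLift, h1]
    · have := rsaeNext_eq A t ht c.2 x.2
      exact Prod.ext (congrArg (fun S => rsaeEnc (t.tgt, S)) this.symm) rfl

theorem rsae_run {Sigma : Type} (A : RsAE Sigma) (w : DataWord Sigma) :
    ∀ c c' : ℕ × (ℕ → Finset ℕ),
    (rsaeSim A).Run (rsaeLift A.R c) w c' ↔ ∃ c1, A.Run c w c1 ∧ c' = rsaeLift A.R c1 := by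
  induction w with
  | nil =>
    intro c c'
    constructor
    · intro h
      cases h
      exact ⟨c, .nil c, rfl⟩
    · rintro ⟨c1, h, rfl⟩
      cases h
      exact .nil _
  | cons x w ih =>
    intro c c'
    constructor
    · intro h
      cases h with
      | cons hs hr =>
        obtain ⟨c1, h1, rfl⟩ := (rsae_step A _ _ _).1 hs
        obtain ⟨c2, h2, rfl⟩ := (ih _ _).1 hr
        exact ⟨c2, .cons h1 h2, rfl⟩
    · rintro ⟨c1, h, rfl⟩
      cases h with
      | cons hs hr =>
        exact .cons ((rsae_step A _ _ _).2 ⟨_, hs, rfl⟩) ((ih _ _).2 ⟨_, hr, rfl⟩)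

theorem rsae_lift_init (R : Finset ℕ) (q : ℕ) :
    rsaeLift R (q, fun _ => ∅) = (rsaeEnc (q, ∅), fun _ => ∅) := by
  simp [rsaeLift, rsaeNe]

/-- Every RsA with register emptiness test can be converted to an
ordinary RsA with the same set of registers and the same language. -/
theorem rsae_to_rsa (Sigma : Type) [Fintype Sigma] [Nonempty Sigma] (A : RsAE Sigma) :
    ∃ A' : RsA Sigma, A'.R = A.R ∧ RsA.Lang A' = RsAE.Lang A := by
  refine ⟨rsaeSim A, rfl, ?_⟩
  ext w
  constructor
  · rintro ⟨q, hq, c, hr, hF⟩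
    obtain ⟨⟨q0, S⟩, hp, rfl⟩ := Finset.mem_image.1 hq
    obtain ⟨hq0, hS⟩ := Finset.mem_product.1 hp
    obtain rfl : S = ∅ := Finset.mem_singleton.1 hS
    rw [← rsae_lift_init A.R] at hr
    obtain ⟨c1, h1, rfl⟩ := (rsae_run A _ _ _).1 hr
    refine ⟨q0, hq0, c1, h1, ?_⟩
    obtain ⟨p, hp, he⟩ := Finset.mem_image.1 hF
    have := rsaeEnc_inj he
    subst this
    exact (Finset.mem_product.1 hp).1
  · rintro ⟨q0, hq0, c, hr, hF⟩
    refine ⟨rsaeEnc (q0, ∅), Finset.mem_image_of_mem _ (Finset.mem_product.2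
      ⟨hq0, Finset.mem_singleton_self _⟩), rsaeLift A.R c, ?_, ?_⟩
    · rw [← rsae_lift_init A.R]
      exact (rsae_run A _ _ _).2 ⟨c, hr, rfl⟩
    · exact Finset.mem_image_of_mem _ (Finset.mem_product.2
        ⟨hF, Finset.mem_powerset.2 (Finset.filter_subset _ _)⟩)
end
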